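/- Let n be odd, 0 ≤ k ≤ n, let P ∈ ℤ[s,t] be the unique polynomial with P·{k}!_{s,t}·{n−k}!_{s,t} = {n}!_{s,t}, let Q ∈ ℤ[q] be the Gaussian binomial polynomial, i.e. the unique polynomial with Q·[k]!_q·[n−k]!_q = [n]!_q, and let ζ = exp(2πi/n) ∈ ℂ. Then for every integer ℓ, P(ζ^ℓ + ζ^{−ℓ}, −1) = Q(ζ^ℓ). -/

import Mathlib

open MvPolynomial

/-- The generalized Fibonacci polynomials `{m}_{s,t} ∈ ℤ[s,t]`, with `s = X 0`, `t = X 1`. -/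
noncomputable def gfib : ℕ → MvPolynomial (Fin 2) ℤ
  | 0 => 0
  | 1 => 1
  | (m + 2) => X 0 * gfib (m + 1) + X 1 * gfib m

/-- The Fibonacci factorial `{m}!_{s,t}`. -/
noncomputable def gfibFact : ℕ → MvPolynomial (Fin 2) ℤ
  | 0 => 1
  | (m + 1) => gfib (m + 1) * gfibFact m

/-- The q-analogue `[m]_q = 1 + q + ⋯ + q^{m-1} ∈ ℤ[q]`. -/
noncomputable def qInt (m : ℕ) : Polynomial ℤ := ∑ i ∈ Finset.range m, Polynomial.X ^ i

/-- The q-factorial `[m]!_q = [m]_q [m-1]_q ⋯ [1]_q`. -/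
noncomputable def qFact : ℕ → Polynomial ℤ
  | 0 => 1
  | (m + 1) => qInt (m + 1) * qFact m

/-- The primitive `n`-th root of unity `ζ = exp(2πi/n)`. -/
noncomputable def primRoot (n : ℕ) : ℂ := Complex.exp (2 * Real.pi * Complex.I / n)

/-!
The two quotients are compared through homogeneity and through the `q`-binomial theorem.

* At `s = a(1 + q)`, `t = -a²q` the Fibonacci polynomial `{m + 1}` is `a ^ m * [m + 1]_q`, so the
  Fibonomial `P` is `a ^ (k(n - k)) * Q(q)`; with `a = w⁻¹` and `q = w²` this is
  `P(w + w⁻¹, -1) = w⁻¹ ^ (k(n - k)) * Q(w²)`.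
* The coefficient of `X ^ k` in `E_q = ∏_{i < n} (1 + q ^ i X)` is `q ^ (k choose 2) * Q(q)`. If
  `w ^ n = 1`, then `E_w` is invariant under `X ↦ wX`, whence `w ^ k * Q(w) = Q(w)`. As `n` is odd,
  this removes the power of `w` in the coefficient. Squaring permutes the factors of `E_w`, so
  `E_{w²} = E_w` and therefore `Q(w²) = Q(w)`.
-/

lemma choose_two_add (k m : ℕ) : (k + m).choose 2 = k.choose 2 + m.choose 2 + k * m := by
  induction m with
  | zero => simp
  | succ m ih =>
    rw [← add_assoc, Nat.choose_succ_succ' (k + m) 1, Nat.choose_succ_succ' m 1, ih,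
      Nat.choose_one_right, Nat.choose_one_right]
    ring

lemma pow_mul_smul_eq_self {M α : Type*} [Monoid M] [MulAction M α] {w : M} {x : α} {k : ℕ}
    (hx : w ^ k • x = x) (j : ℕ) : w ^ (k * j) • x = x := by
  have hmem : w ^ k ∈ MulAction.stabilizerSubmonoid M x := hx
  rw [pow_mul]
  exact pow_mem hmem j

lemma pow_choose_two_smul_eq_self {M α : Type*} [Monoid M] [MulAction M α] {w : M} {x : α}
    {n k : ℕ} (hn : Odd n) (hw : w ^ n = 1) (hx : w ^ k • x = x) : w ^ k.choose 2 • x = x := by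
  obtain ⟨r, rfl⟩ := hn
  -- `w = w ^ (n + 1)` with `n + 1` even clears the denominator of `k.choose 2 = k * (k - 1) / 2`.
  have hexp : k.choose 2 + (2 * r + 1) * k.choose 2 = k * ((k - 1) * (r + 1)) := by
    rw [← mul_assoc k, ← Nat.div_mul_cancel (Nat.even_mul_pred_self k).two_dvd,
      ← Nat.choose_two_right]
    ring
  calc w ^ k.choose 2 • x = w ^ (k.choose 2 + (2 * r + 1) * k.choose 2) • x := by
        rw [pow_add, pow_mul w (2 * r + 1), hw, one_pow, mul_one]
    _ = x := by rw [hexp, pow_mul_smul_eq_self hx]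

lemma qInt_add_two (m : ℕ) :
    qInt (m + 2) = (1 + Polynomial.X) * qInt (m + 1) - Polynomial.X * qInt m := by
  simp only [qInt, Finset.sum_range_succ]
  ring

lemma one_sub_X_mul_qInt (m : ℕ) :
    (1 - Polynomial.X) * qInt m = 1 - Polynomial.X ^ m :=
  mul_neg_geom_sum _ m

lemma qFact_monic (m : ℕ) : (qFact m).Monic := by
  induction m with
  | zero => exact Polynomial.monic_one
  | succ m ih => exact (Polynomial.monic_geom_sum_X m.succ_ne_zero).mul ih

section Fibonomial

variable {R : Type*} [CommRing R]

-- The `ℤ`-algebra structure is arbitrary: the polynomial one on `ℤ[q][a]`, to which this is applied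
-- below, is not syntactically the one that every commutative ring carries.
lemma aeval_gfib_succ [Algebra ℤ R] (a q : R) (m : ℕ) :
    aeval ![a * (1 + q), -(a ^ 2 * q)] (gfib (m + 1))
      = a ^ m * Polynomial.aeval q (qInt (m + 1)) := by
  induction m using Nat.twoStepInduction with
  | zero => simp [gfib, qInt]
  | one => simp [gfib, qInt, Finset.sum_range_succ]
  | more m ih ih' =>
    rw [gfib, map_add, map_mul, map_mul, ih, ih', qInt_add_two (m + 1)]
    simp only [aeval_X, Matrix.cons_val_zero, Matrix.cons_val_one, map_sub, map_mul, map_add,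
      map_one, Polynomial.aeval_X]
    ring

lemma aeval_gfibFact [Algebra ℤ R] (a q : R) (m : ℕ) :
    aeval ![a * (1 + q), -(a ^ 2 * q)] (gfibFact m)
      = a ^ m.choose 2 * Polynomial.aeval q (qFact m) := by
  induction m with
  | zero => simp [gfibFact, qFact]
  | succ m ih =>
    rw [gfibFact, qFact, map_mul, map_mul, aeval_gfib_succ, ih, choose_two_add m 1]
    simp only [Nat.choose_succ_self, add_zero, mul_one]
    ring

lemma aeval_fibonomial {k m : ℕ} {P : MvPolynomial (Fin 2) ℤ} {Q : Polynomial ℤ}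
    (hP : P * gfibFact k * gfibFact m = gfibFact (k + m))
    (hQ : Q * qFact k * qFact m = qFact (k + m)) (a q : R) :
    aeval ![a * (1 + q), -(a ^ 2 * q)] P = a ^ (k * m) * Polynomial.aeval q Q := by
  -- It suffices to treat independent `a` and `q`, where the factorials can be cancelled.
  let A : Polynomial (Polynomial ℤ) := Polynomial.X
  let q₀ : Polynomial (Polynomial ℤ) := Polynomial.C Polynomial.X
  have haeval (F : Polynomial ℤ) : Polynomial.aeval q₀ F = Polynomial.C F := by
    have h := Polynomial.aeval_algebraMap_apply (Polynomial (Polynomial ℤ))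
      (Polynomial.X : Polynomial ℤ) F
    rwa [Polynomial.aeval_X_left_apply] at h
  have huniv : aeval ![A * (1 + q₀), -(A ^ 2 * q₀)] P = A ^ (k * m) * Polynomial.C Q := by
    have hA (j : ℕ) : A ^ j ≠ 0 := pow_ne_zero j Polynomial.X_ne_zero
    have hfact (j : ℕ) : Polynomial.C (qFact j) ≠ 0 :=
      Polynomial.C_ne_zero.2 (qFact_monic j).ne_zero
    have h := congrArg (aeval ![A * (1 + q₀), -(A ^ 2 * q₀)]) hP
    simp only [map_mul, aeval_gfibFact, haeval, ← hQ, choose_two_add k m, pow_add] at h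
    refine mul_right_cancel₀ (mul_ne_zero (mul_ne_zero (hA (k.choose 2)) (hfact k))
      (mul_ne_zero (hA (m.choose 2)) (hfact m))) ?_
    linear_combination h
  have hspec := congrArg (Polynomial.aevalAeval q a) huniv
  rw [map_mul, map_pow, Polynomial.aevalAeval_C, Polynomial.aevalAeval_Y] at hspec
  rw [← hspec, ← AlgHom.comp_apply, comp_aeval]
  congr
  ext i
  fin_cases i <;> simp [A, q₀, mul_comm q]

lemma pow_smul_aeval_fibonomial_add_inv {k m : ℕ} {P : MvPolynomial (Fin 2) ℤ} {Q : Polynomial ℤ}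
    (hP : P * gfibFact k * gfibFact m = gfibFact (k + m))
    (hQ : Q * qFact k * qFact m = qFact (k + m)) (u : Rˣ) :
    u ^ (k * m) • aeval ![(u : R) + ↑u⁻¹, -1] P = Polynomial.aeval ((u ^ 2 : Rˣ) : R) Q := by
  have hs : (↑u⁻¹ : R) * (1 + ↑(u ^ 2)) = u + ↑u⁻¹ := by
    rw [mul_add, mul_one, ← Units.val_mul, pow_two, inv_mul_cancel_left, add_comm]
  have ht : (↑u⁻¹ : R) ^ 2 * ↑(u ^ 2) = 1 := by
    rw [← Units.val_pow_eq_pow_val, ← Units.val_mul, inv_pow, inv_mul_cancel, Units.val_one]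
  have h := aeval_fibonomial hP hQ (↑u⁻¹ : R) ↑(u ^ 2)
  rw [hs, ht, ← Units.val_pow_eq_pow_val, inv_pow] at h
  rw [h, Units.smul_def, smul_eq_mul, Units.mul_inv_cancel_left]

end Fibonomial

/-- The polynomial `∏_{i < n} (1 + q ^ i X)`, the `q`-Pochhammer symbol `(-X; q)_n`, which is the
generating function of the Gaussian binomials `n` choose `k`, up to powers of `q`. -/
noncomputable def qPochhammer {R : Type*} [CommSemiring R] (q : R) (n : ℕ) : Polynomial R :=
  ∏ i ∈ Finset.range n, (1 + Polynomial.C (q ^ i) * Polynomial.X)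

section QPochhammer

variable {R : Type*}

lemma coeff_zero_qPochhammer [CommSemiring R] (q : R) (n : ℕ) : (qPochhammer q n).coeff 0 = 1 := by
  simp [qPochhammer, Polynomial.coeff_zero_prod]

lemma map_qPochhammer {S : Type*} [CommSemiring R] [CommSemiring S] (f : R →+* S) (q : R) (n : ℕ) :
    (qPochhammer q n).map f = qPochhammer (f q) n := by
  simp [qPochhammer, Polynomial.map_prod]

lemma qPochhammer_pow_of_coprime [CommSemiring R] {q : R} {n c : ℕ} (hc : n.Coprime c)
    (hq : q ^ n = 1) : qPochhammer (q ^ c) n = qPochhammer q n := by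
  have hmaps : Set.MapsTo (fun i => c * i % n) (Finset.range n) (Finset.range n) := by
    intro i hi
    have hpos : 0 < n := (Nat.zero_le i).trans_lt (Finset.mem_range.1 hi)
    simpa using Nat.mod_lt _ hpos
  have hinj : Set.InjOn (fun i => c * i % n) (Finset.range n) := by
    intro i hi j hj hij
    exact (Nat.ModEq.cancel_left_of_coprime hc hij).eq_of_lt_of_lt (Finset.mem_range.1 hi)
      (Finset.mem_range.1 hj)
  refine Finset.prod_nbij (fun i => c * i % n) hmaps hinj
    (Finset.surjOn_of_injOn_of_card_le _ hmaps hinj le_rfl) fun i _ => ?_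
  rw [← pow_mul, pow_eq_pow_mod (c * i) hq]

lemma one_add_X_mul_qPochhammer_comp [CommSemiring R] (q : R) (n : ℕ) :
    (1 + Polynomial.X) * (qPochhammer q n).comp (Polynomial.C q * Polynomial.X)
      = (1 + Polynomial.C (q ^ n) * Polynomial.X) * qPochhammer q n := by
  have hcomp : (qPochhammer q n).comp (Polynomial.C q * Polynomial.X)
      = ∏ i ∈ Finset.range n, (1 + Polynomial.C (q ^ (i + 1)) * Polynomial.X) := by
    simp [qPochhammer, Polynomial.prod_comp, pow_succ, mul_assoc]
  have hsucc := Finset.prod_range_succ' (fun i => 1 + Polynomial.C (q ^ i) * Polynomial.X) n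
  rw [Finset.prod_range_succ, pow_zero, map_one, one_mul] at hsucc
  rw [hcomp, mul_comm, ← hsucc, mul_comm, qPochhammer]

lemma one_sub_pow_mul_coeff_succ_qPochhammer [CommRing R] (q : R) (n k : ℕ) :
    (1 - q ^ (k + 1)) * (qPochhammer q n).coeff (k + 1)
      = (q ^ k - q ^ n) * (qPochhammer q n).coeff k := by
  have h := congrArg (Polynomial.coeff · (k + 1)) (one_add_X_mul_qPochhammer_comp q n)
  simp only [add_mul, one_mul, mul_assoc, Polynomial.coeff_add, Polynomial.coeff_X_mul,
    Polynomial.coeff_C_mul, Polynomial.comp_C_mul_X_coeff] at h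
  linear_combination -h

lemma coeff_qPochhammer_X_mul_qFact (k m : ℕ) :
    (qPochhammer (Polynomial.X : Polynomial ℤ) (k + m)).coeff k * (qFact k * qFact m)
      = Polynomial.X ^ k.choose 2 * qFact (k + m) := by
  induction k generalizing m with
  | zero => simp [coeff_zero_qPochhammer, qFact]
  | succ k ih =>
    have hrec : qInt (k + 1) * (qPochhammer Polynomial.X (k + 1 + m)).coeff (k + 1)
        = Polynomial.X ^ k * qInt (m + 1) * (qPochhammer Polynomial.X (k + 1 + m)).coeff k := by
      have hX : (1 - Polynomial.X : Polynomial ℤ) ≠ 0 :=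
        sub_ne_zero.2 (Polynomial.X_ne_C 1).symm
      refine mul_left_cancel₀ hX ?_
      have h := one_sub_pow_mul_coeff_succ_qPochhammer (Polynomial.X : Polynomial ℤ) (k + 1 + m) k
      linear_combination h
        + (qPochhammer Polynomial.X (k + 1 + m)).coeff (k + 1) * one_sub_X_mul_qInt (k + 1)
        - Polynomial.X ^ k * (qPochhammer Polynomial.X (k + 1 + m)).coeff k
          * one_sub_X_mul_qInt (m + 1)
    have ih' := ih (m + 1)
    rw [← add_assoc, add_right_comm, qFact] at ih'
    rw [qFact, choose_two_add k 1, Nat.choose_succ_self, add_zero, mul_one, pow_add]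
    linear_combination qFact k * qFact m * hrec + Polynomial.X ^ k * ih'

variable [CommRing R]

lemma coeff_qPochhammer {k m : ℕ} {Q : Polynomial ℤ}
    (hQ : Q * qFact k * qFact m = qFact (k + m)) (q : R) :
    (qPochhammer q (k + m)).coeff k = q ^ k.choose 2 * Polynomial.aeval q Q := by
  have huniv : (qPochhammer Polynomial.X (k + m)).coeff k = Polynomial.X ^ k.choose 2 * Q := by
    refine mul_right_cancel₀ ((qFact_monic k).mul (qFact_monic m)).ne_zero ?_
    rw [coeff_qPochhammer_X_mul_qFact, ← hQ]
    ring
  have hmap := map_qPochhammer (Polynomial.aeval q : Polynomial ℤ →ₐ[ℤ] R).toRingHom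
    Polynomial.X (k + m)
  simp only [AlgHom.toRingHom_eq_coe, RingHom.coe_coe, Polynomial.aeval_X] at hmap
  rw [← hmap, Polynomial.coeff_map, huniv, RingHom.coe_coe, map_mul, map_pow, Polynomial.aeval_X]

lemma pow_mul_coeff_qPochhammer {q : R} {n : ℕ} (hq : q ^ n = 1) (k : ℕ) :
    q ^ k * (qPochhammer q n).coeff k = (qPochhammer q n).coeff k := by
  have hcomp : (qPochhammer q n).comp (Polynomial.C q * Polynomial.X) = qPochhammer q n := by
    have h := one_add_X_mul_qPochhammer_comp q n
    rw [hq, map_one, one_mul] at h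
    have hmonic : (1 + Polynomial.X : Polynomial R).Monic := by
      simpa [add_comm] using Polynomial.monic_X_add_C (1 : R)
    exact hmonic.isRegular.left h
  rw [mul_comm, ← Polynomial.comp_C_mul_X_coeff, hcomp]

end QPochhammer

section RootOfUnity

variable {R : Type*} [CommRing R] {k m : ℕ} {Q : Polynomial ℤ} {u : Rˣ}

lemma pow_smul_aeval_qbinomial (hQ : Q * qFact k * qFact m = qFact (k + m))
    (hu : u ^ (k + m) = 1) :
    u ^ k • Polynomial.aeval (u : R) Q = Polynomial.aeval (u : R) Q := by
  have hu' : (u : R) ^ (k + m) = 1 := by simpa using congrArg Units.val hu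
  have hcoeff := pow_mul_coeff_qPochhammer hu' k
  rw [coeff_qPochhammer hQ, mul_left_comm] at hcoeff
  exact (u.isUnit.pow _).mul_left_cancel hcoeff

lemma coeff_qPochhammer_of_pow_eq_one (hn : Odd (k + m))
    (hQ : Q * qFact k * qFact m = qFact (k + m)) (hu : u ^ (k + m) = 1) :
    (qPochhammer (u : R) (k + m)).coeff k = Polynomial.aeval (u : R) Q :=
  (coeff_qPochhammer hQ (u : R)).trans
    (pow_choose_two_smul_eq_self hn hu (pow_smul_aeval_qbinomial hQ hu))

lemma aeval_sq_qbinomial (hn : Odd (k + m)) (hQ : Q * qFact k * qFact m = qFact (k + m))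
    (hu : u ^ (k + m) = 1) :
    Polynomial.aeval ((u ^ 2 : Rˣ) : R) Q = Polynomial.aeval (u : R) Q := by
  have hu2 : (u ^ 2) ^ (k + m) = 1 := by rw [pow_right_comm, hu, one_pow]
  have hu' : (u : R) ^ (k + m) = 1 := by simpa using congrArg Units.val hu
  rw [← coeff_qPochhammer_of_pow_eq_one hn hQ hu2, ← coeff_qPochhammer_of_pow_eq_one hn hQ hu,
    Units.val_pow_eq_pow_val, qPochhammer_pow_of_coprime hn.coprime_two_right hu']

end RootOfUnity

lemma exists_unit_eq_primRoot_zpow {n : ℕ} (hn : n ≠ 0) (ℓ : ℤ) :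
    ∃ u : ℂˣ, u ^ n = 1 ∧ (u : ℂ) = primRoot n ^ ℓ := by
  have hζ : primRoot n ^ n = 1 := (Complex.isPrimitiveRoot_exp n hn).pow_eq_one
  refine ⟨Units.ofPowEqOne (primRoot n) n hζ hn ^ ℓ, ?_, by simp⟩
  rw [← zpow_natCast, zpow_comm, zpow_natCast, Units.pow_ofPowEqOne, one_zpow]

theorem fibonomial_eval_eq_qbinomial_eval_general {R : Type*} [CommRing R] (n k : ℕ) (hn : Odd n)
    (hk : k ≤ n) (P : MvPolynomial (Fin 2) ℤ)
    (hP : P * gfibFact k * gfibFact (n - k) = gfibFact n)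
    (Q : Polynomial ℤ)
    (hQ : Q * qFact k * qFact (n - k) = qFact n) (u : Rˣ) (hu : u ^ n = 1) :
    aeval ![(u : R) + ↑u⁻¹, -1] P = Polynomial.aeval (u : R) Q := by
  obtain ⟨m, rfl⟩ := Nat.exists_eq_add_of_le hk
  rw [Nat.add_sub_cancel_left] at hP hQ
  refine smul_left_cancel (u ^ (k * m)) ?_
  rw [pow_smul_aeval_fibonomial_add_inv hP hQ, aeval_sq_qbinomial hn hQ hu,
    pow_mul_smul_eq_self (pow_smul_aeval_qbinomial hQ hu)]

/-- For `n` odd and `0 ≤ k ≤ n`, the Fibonomial polynomial `P` and the Gaussian binomial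
polynomial `Q` satisfy `P(ζ^ℓ + ζ^{-ℓ}, -1) = Q(ζ^ℓ)` for all integers `ℓ`. -/
theorem fibonomial_eval_eq_qbinomial_eval (n k : ℕ) (hn : Odd n) (hk : k ≤ n)
    (P : MvPolynomial (Fin 2) ℤ)
    (hP : P * gfibFact k * gfibFact (n - k) = gfibFact n)
    (Q : Polynomial ℤ)
    (hQ : Q * qFact k * qFact (n - k) = qFact n) :
    ∀ ℓ : ℤ,
      aeval ![primRoot n ^ ℓ + primRoot n ^ (-ℓ), (-1 : ℂ)] P
        = Polynomial.aeval (primRoot n ^ ℓ) Q := by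
  intro ℓ
  obtain ⟨u, hu, huℓ⟩ := exists_unit_eq_primRoot_zpow hn.pos.ne' ℓ
  simpa [zpow_neg, ← huℓ] using
    fibonomial_eval_eq_qbinomial_eval_general n k hn hk P hP Q hQ u hu
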